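/- arXiv:1003.2584 — 4 statements merged into one kernel-verified Lean document; each statement's English description precedes it below -/
import Mathlib

section
/- Let G be a group. If there exists a nonzero continuous linear functional φ on ℓ∞(G) that is invariant under the left-translation action of G, then G admits a left-invariant mean, i.e. G is amenable. (The mean is obtained by taking the absolute value of φ and normalising.) -/
noncomputable section
open scoped ENNReal

/-- `ℓ∞(G)`: the Banach space of bounded real-valued functions on `G` with the sup norm. -/
abbrev Linf (G : Type*) : Type _ := ↥(lp (fun _ : G => ℝ) ∞)

/-- The left-translation action of `G` on `ℓ∞(G)`: `(g · f)(h) = f (g⁻¹ h)`. -/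
def ltrans {G : Type*} [Group G] (g : G) (f : Linf G) : Linf G :=
  ⟨fun h => f (g⁻¹ * h),
    memℓp_infty ⟨‖f‖, by
      rintro x ⟨h, rfl⟩
      exact lp.norm_apply_le_norm ENNReal.top_ne_zero f (g⁻¹ * h)⟩⟩

/-- The constant function `1` as an element of `ℓ∞(G)`. -/
def lone (G : Type*) : Linf G :=
  ⟨fun _ => 1, memℓp_infty ⟨1, by rintro x ⟨h, rfl⟩; simp⟩⟩

/-!
In a normed lattice, the modulus `|φ|`, given on the positive cone by
`|φ| f = sup {φ k | |k| ≤ f}`, is additive there by the Riesz decomposition property, and so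
extends to a positive continuous functional. An order automorphism fixing `φ` permutes the
intervals `{k | |k| ≤ f}`, hence fixes `|φ|` too. Since `φ f ≤ |φ| |f|`, the modulus of a nonzero
functional is nonzero and can be normalised. Translations are order automorphisms of `ℓ∞(G)`.
-/

section LatticeOrderedGroup

theorem orderAddMonoidIso_map_abs {E F : Type*} [AddGroup E] [Lattice E] [AddGroup F] [Lattice F]
    (T : E ≃+o F) (f : E) : T |f| = |T f| := by
  simp only [abs, map_sup, map_neg]

variable {E : Type*} [AddCommGroup E] [Lattice E] [IsOrderedAddMonoid E]

theorem exists_add_eq_of_abs_le_add {a b k : E} (ha : 0 ≤ a) (hb : 0 ≤ b) (hk : |k| ≤ a + b) :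
    ∃ x y, |x| ≤ a ∧ |y| ≤ b ∧ x + y = k := by
  obtain ⟨hk_le, hk_neg_le⟩ := abs_le'.1 hk
  -- Truncate `k` to the interval `[-a, a]`.
  refine ⟨k ⊓ a ⊔ -a, k - (k ⊓ a ⊔ -a), abs_le'.2 ⟨?_, ?_⟩, abs_le'.2 ⟨?_, ?_⟩, add_sub_cancel _ _⟩
  · exact sup_le inf_le_right (neg_le_self ha)
  · exact neg_le.1 le_sup_right
  · have h_inf : k - b ≤ k ⊓ a := le_inf (sub_le_self k hb) (sub_le_iff_le_add.2 hk_le)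
    exact sub_le_comm.1 (h_inf.trans le_sup_left)
  · rw [neg_sub, sub_le_iff_le_add']
    refine sup_le (inf_le_left.trans (le_add_of_nonneg_right hb)) ?_
    calc
      -a = -(a + b) + b := by abel
      _ ≤ k + b := by
        gcongr
        exact neg_le.1 hk_neg_le

/-- The additive extension `f ↦ p f⁺ - p f⁻` to a lattice-ordered group of a map `p` which is
additive on the positive cone; the values of `p` off the cone are ignored. -/
def posConeExtension {A : Type*} [AddCommGroup A] (p : E → A)
    (hp : ∀ a b, 0 ≤ a → 0 ≤ b → p (a + b) = p a + p b) : E →+ A :=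
  AddMonoidHom.mk' (fun f => p f⁺ - p f⁻) fun f g => by
    have h_parts : (f + g)⁺ + (f⁻ + g⁻) = (f⁺ + g⁺) + (f + g)⁻ := by
      rw [← sub_eq_sub_iff_add_eq_add, posPart_sub_negPart, add_sub_add_comm,
        posPart_sub_negPart, posPart_sub_negPart]
    have h_values := congrArg p h_parts
    rw [hp _ _ (posPart_nonneg _) (add_nonneg (negPart_nonneg _) (negPart_nonneg _)),
      hp _ _ (add_nonneg (posPart_nonneg _) (posPart_nonneg _)) (negPart_nonneg _),
      hp _ _ (negPart_nonneg _) (negPart_nonneg _),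
      hp _ _ (posPart_nonneg _) (posPart_nonneg _), ← sub_eq_sub_iff_add_eq_add] at h_values
    rw [h_values, add_sub_add_comm]

theorem posConeExtension_of_nonneg {A : Type*} [AddCommGroup A] {p : E → A}
    (hp : ∀ a b, 0 ≤ a → 0 ≤ b → p (a + b) = p a + p b) {f : E} (hf : 0 ≤ f) :
    posConeExtension p hp f = p f := by
  have h_zero : p 0 = 0 := by simpa using hp 0 0 le_rfl le_rfl
  change p f⁺ - p f⁻ = p f
  rw [posPart_of_nonneg hf, negPart_of_nonneg hf, h_zero, sub_zero]

end LatticeOrderedGroup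

section Modulus

variable {E : Type*} [NormedAddCommGroup E] [NormedSpace ℝ E] [Lattice E]

/-- The modulus `|φ|` of a functional on the positive cone, as the supremum of `φ` over the
order interval `[-f, f]`; off the cone the interval is empty and the value is the junk `sSup ∅ = 0`.
-/
def modulusOnCone (φ : E →L[ℝ] ℝ) (f : E) : ℝ := sSup (φ '' {k | |k| ≤ f})

theorem modulusOnCone_le [IsOrderedAddMonoid E] (φ : E →L[ℝ] ℝ) {f : E} (hf : 0 ≤ f) {C : ℝ}
    (hC : ∀ k, |k| ≤ f → φ k ≤ C) :
    modulusOnCone φ f ≤ C := by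
  refine csSup_le ⟨φ f, f, (abs_of_nonneg hf).le, rfl⟩ ?_
  rintro _ ⟨k, hk, rfl⟩
  exact hC k hk

theorem modulusOnCone_map {φ : E →L[ℝ] ℝ} {T : E ≃+o E} (hT : ∀ f, φ (T f) = φ f) (f : E) :
    modulusOnCone φ (T f) = modulusOnCone φ f := by
  have h_interval : {k | |k| ≤ T f} = T '' {k | |k| ≤ f} := by
    ext k
    obtain ⟨l, rfl⟩ := EquivLike.surjective T k
    simp [← orderAddMonoidIso_map_abs]
  simp only [modulusOnCone, h_interval, Set.image_image, hT]

variable [HasSolidNorm E] (φ : E →L[ℝ] ℝ)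

theorem apply_le_norm_mul_norm_of_abs_le {f k : E} (hk : |k| ≤ f) : φ k ≤ ‖φ‖ * ‖f‖ :=
  calc
    φ k ≤ ‖φ‖ * ‖k‖ := (Real.le_norm_self _).trans (φ.le_opNorm k)
    _ ≤ ‖φ‖ * ‖f‖ := by
      gcongr
      exact norm_le_norm_of_abs_le_abs (hk.trans (le_abs_self f))

theorem le_modulusOnCone {f k : E} (hk : |k| ≤ f) : φ k ≤ modulusOnCone φ f := by
  refine le_csSup ⟨‖φ‖ * ‖f‖, ?_⟩ ⟨k, hk, rfl⟩
  rintro _ ⟨l, hl, rfl⟩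
  exact apply_le_norm_mul_norm_of_abs_le φ hl

variable [IsOrderedAddMonoid E]

theorem modulusOnCone_nonneg {f : E} (hf : 0 ≤ f) : 0 ≤ modulusOnCone φ f := by
  simpa using le_modulusOnCone φ (k := 0) (abs_zero.trans_le hf)

theorem modulusOnCone_add (a b : E) (ha : 0 ≤ a) (hb : 0 ≤ b) :
    modulusOnCone φ (a + b) = modulusOnCone φ a + modulusOnCone φ b := by
  apply le_antisymm
  · refine modulusOnCone_le φ (add_nonneg ha hb) fun k hk => ?_
    obtain ⟨x, y, hx, hy, rfl⟩ := exists_add_eq_of_abs_le_add ha hb hk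
    rw [map_add]
    exact add_le_add (le_modulusOnCone φ hx) (le_modulusOnCone φ hy)
  · rw [← le_sub_iff_add_le]
    refine modulusOnCone_le φ ha fun x hx => ?_
    rw [le_sub_comm]
    refine modulusOnCone_le φ hb fun y hy => ?_
    rw [le_sub_iff_add_le', ← map_add]
    exact le_modulusOnCone φ ((abs_add_le x y).trans (add_le_add hx hy))

theorem abs_posConeExtension_modulusOnCone_le (f : E) :
    |posConeExtension (modulusOnCone φ) (modulusOnCone_add φ) f| ≤ ‖φ‖ * ‖f‖ :=
  calc
    |modulusOnCone φ f⁺ - modulusOnCone φ f⁻|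
      ≤ |modulusOnCone φ f⁺| + |modulusOnCone φ f⁻| := abs_sub _ _
    _ = modulusOnCone φ f⁺ + modulusOnCone φ f⁻ := by
      rw [abs_of_nonneg (modulusOnCone_nonneg φ (posPart_nonneg f)),
        abs_of_nonneg (modulusOnCone_nonneg φ (negPart_nonneg f))]
    _ = modulusOnCone φ |f| := by
      rw [← modulusOnCone_add φ _ _ (posPart_nonneg f) (negPart_nonneg f), posPart_add_negPart]
    _ ≤ ‖φ‖ * ‖|f|‖ :=
      modulusOnCone_le φ (abs_nonneg f) fun _ hk => apply_le_norm_mul_norm_of_abs_le φ hk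
    _ = ‖φ‖ * ‖f‖ := by rw [norm_abs_eq_norm]

/-- The modulus `|φ|` of a continuous linear functional on a normed lattice. Real homogeneity
comes from continuity and additivity. -/
def modulus : E →L[ℝ] ℝ :=
  (posConeExtension (modulusOnCone φ) (modulusOnCone_add φ)).toRealLinearMap
    (AddMonoidHomClass.continuous_of_bound _ ‖φ‖ (abs_posConeExtension_modulusOnCone_le φ))

theorem modulus_of_nonneg {f : E} (hf : 0 ≤ f) : modulus φ f = modulusOnCone φ f :=
  posConeExtension_of_nonneg (modulusOnCone_add φ) hf

theorem modulus_nonneg {f : E} (hf : 0 ≤ f) : 0 ≤ modulus φ f :=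
  (modulusOnCone_nonneg φ hf).trans_eq (modulus_of_nonneg φ hf).symm

theorem apply_le_modulus_abs (f : E) : φ f ≤ modulus φ |f| :=
  (le_modulusOnCone φ le_rfl).trans_eq (modulus_of_nonneg φ (abs_nonneg f)).symm

variable {φ}

theorem modulus_ne_zero (hφ : φ ≠ 0) : modulus φ ≠ 0 := by
  contrapose! hφ
  have h_nonpos (f : E) : φ f ≤ 0 := by simpa [hφ] using apply_le_modulus_abs φ f
  ext f
  exact (h_nonpos f).antisymm (by simpa using h_nonpos (-f))

theorem modulus_map {T : E ≃+o E} (hT : ∀ f, φ (T f) = φ f) (f : E) :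
    modulus φ (T f) = modulus φ f := by
  have h_cone {a : E} (ha : 0 ≤ a) : modulus φ (T a) = modulus φ a := by
    rw [modulus_of_nonneg φ ha, modulus_of_nonneg φ (map_nonneg T ha), modulusOnCone_map hT]
  rw [← posPart_sub_negPart f, map_sub, map_sub, map_sub, h_cone (posPart_nonneg f),
    h_cone (negPart_nonneg f)]

theorem amenable_of_exists_nonzero_invariant_functional_general (φ : E →L[ℝ] ℝ) (hφ : φ ≠ 0)
    {ι : Type*} (T : ι → E ≃+o E) (hinv : ∀ i f, φ (T i f) = φ f) :
    ∃ μ : E →L[ℝ] ℝ, (∀ f, 0 ≤ f → 0 ≤ μ f) ∧ ‖μ‖ = 1 ∧ ∀ i f, μ (T i f) = μ f := by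
  refine ⟨‖modulus φ‖⁻¹ • modulus φ, fun f hf => ?_, ?_, fun i f => ?_⟩
  · exact mul_nonneg (inv_nonneg.2 (norm_nonneg _)) (modulus_nonneg φ hf)
  · exact norm_smul_inv_norm (𝕜 := ℝ) (modulus_ne_zero hφ)
  · exact congrArg (‖modulus φ‖⁻¹ * ·) (modulus_map (hinv i) f)

end Modulus

section LpLattice

variable {ι : Type*} {E : ι → Type*} [∀ i, NormedAddCommGroup (E i)] {p : ℝ≥0∞}

instance [∀ i, LE (E i)] : LE (lp E p) := ⟨fun f g => (f : ∀ i, E i) ≤ g⟩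

instance [∀ i, Preorder (E i)] : LT (lp E p) := ⟨fun f g => (f : ∀ i, E i) < g⟩

variable [∀ i, Lattice (E i)] [∀ i, HasSolidNorm (E i)] [∀ i, IsOrderedAddMonoid (E i)]

instance : Max (lp E p) :=
  ⟨fun f g => ⟨fun i => f i ⊔ g i,
    ((lp.memℓp f).norm.add (lp.memℓp g).norm).mono fun i => norm_sup_le_add (f i) (g i)⟩⟩

instance : Min (lp E p) :=
  ⟨fun f g => ⟨fun i => f i ⊓ g i,
    ((lp.memℓp f).norm.add (lp.memℓp g).norm).mono fun i => norm_inf_le_add (f i) (g i)⟩⟩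

instance : Lattice (lp E p) :=
  Function.Injective.lattice (fun f => (f : ∀ i, E i)) Subtype.coe_injective
    .rfl .rfl (fun _ _ => rfl) (fun _ _ => rfl)

instance : IsOrderedAddMonoid (lp E p) :=
  Function.Injective.isOrderedAddMonoid (fun f => (f : ∀ i, E i)) (fun _ _ => rfl) .rfl

instance [Fact (1 ≤ p)] : HasSolidNorm (lp E p) where
  solid _ _ hfg := lp.norm_mono (zero_lt_one.trans_le Fact.out).ne'
    fun i => norm_le_norm_of_abs_le_abs (hfg i)

end LpLattice

theorem ltrans_inv_ltrans {G : Type*} [Group G] (g : G) (f : Linf G) :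
    ltrans g⁻¹ (ltrans g f) = f :=
  lp.ext (funext fun h => congrArg f (by group))

/-- Left translation by `g`, as an automorphism of the ordered group `ℓ∞(G)`. -/
def ltransOrderIso {G : Type*} [Group G] (g : G) : Linf G ≃+o Linf G where
  toFun := ltrans g
  invFun := ltrans g⁻¹
  left_inv := ltrans_inv_ltrans g
  right_inv f := by simpa only [inv_inv] using ltrans_inv_ltrans g⁻¹ f
  map_add' _ _ := rfl
  map_le_map_iff' {a b} := (Equiv.mulLeft g⁻¹).forall_congr_right (q := fun h => a h ≤ b h)

/-- If a group `G` admits a nonzero continuous `G`-invariant linear functional on `ℓ∞(G)`,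
then `G` admits a left-invariant mean, i.e. `G` is amenable. -/
theorem amenable_of_exists_nonzero_invariant_functional
    (G : Type*) [Group G]
    (φ : Linf G →L[ℝ] ℝ) (hφ : φ ≠ 0)
    (hinv : ∀ (g : G) (f : Linf G), φ (ltrans g f) = φ f) :
    ∃ μ : Linf G →L[ℝ] ℝ,
      (∀ f : Linf G, (∀ h : G, 0 ≤ f h) → 0 ≤ μ f) ∧ ‖μ‖ = 1 ∧
      (∀ (g : G) (f : Linf G), μ (ltrans g f) = μ f) :=
  amenable_of_exists_nonzero_invariant_functional_general φ hφ ltransOrderIso hinv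
end
end

section
/- Let G be a countable discrete group. If the constant function 1 does not lie in the linear span of {g·f − f : g ∈ G, f ∈ ℓ∞(G)} inside ℓ∞(G), then G admits a left-invariant mean, i.e. G is amenable. (This is the implication from non-vanishing of the Block–Weinberger fundamental class to amenability, proved via Nowak's argument using Reiter sequences.) -/
/-!
If no coboundary is everywhere at least `1`, then every coboundary is at distance at least `1` from
the constant function `1`, and a norm-one functional that vanishes on coboundaries and takes the
value `1` at `1` is an invariant mean. If instead `v = ∑ i, (g i · f i - f i) ≥ 1`, pairing `v` with
`|a|` for a finitely supported `a` yields the `ℓ¹`-isoperimetric inequality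
`‖a‖₁ ≤ ∑ i, ‖f i‖ * ‖(g i)⁻¹ · a - a‖₁`. The total mass of `a` is therefore a bounded function of
the family `((g i)⁻¹ · a - a)ᵢ`. By Hahn-Banach it is the restriction of a bounded functional on all
families, which is given by bounded functions `f' i`, and dualizing gives
`∑ i, (g i · f' i - f' i) = 1`.
-/

noncomputable section
open scoped ENNReal

section HahnBanach

variable {𝕜 E F : Type*} [NormedField 𝕜] [IsRCLikeNormedField 𝕜] [AddCommGroup E] [Module 𝕜 E]
  [AddCommGroup F] [Module 𝕜 F]

theorem exists_dual_comp_eq_of_norm_le_seminorm (D : E →ₗ[𝕜] F) (t : Module.Dual 𝕜 E)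
    (p : Seminorm 𝕜 F) (h : ∀ a, ‖t a‖ ≤ p (D a)) :
    ∃ φ : Module.Dual 𝕜 F, φ ∘ₗ D = t ∧ ∀ x, ‖φ x‖ ≤ p x := by
  have ht : t ∈ (LinearMap.ker D).dualAnnihilator := by
    refine (Submodule.mem_dualAnnihilator t).2 fun a ha ↦ norm_le_zero_iff.1 ?_
    simpa [LinearMap.mem_ker.1 ha] using h a
  rw [← LinearMap.range_dualMap_eq_dualAnnihilator_ker] at ht
  obtain ⟨ψ, rfl⟩ := ht
  obtain ⟨φ, hφ, hφp⟩ := Module.Dual.exists_extension_of_le_seminorm (LinearMap.range D)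
    (ψ.domRestrict _) (p := p) (by rintro ⟨_, a, rfl⟩; exact h a)
  exact ⟨φ, LinearMap.ext fun a ↦ hφ ⟨D a, a, rfl⟩, hφp⟩

end HahnBanach

section LinearCombination

variable {ι R M : Type*} [Semiring R] [PartialOrder R] [AddCommMonoid M] [PartialOrder M]
  [IsOrderedAddMonoid M] [Module R M]

theorem linearCombination_mono_left [PosSMulMono R M] {a : ι →₀ R} {v w : ι → M}
    (ha : 0 ≤ a) (hvw : v ≤ w) :
    Finsupp.linearCombination R v a ≤ Finsupp.linearCombination R w a :=
  Finsupp.sum_le_sum fun i _ ↦ smul_le_smul_of_nonneg_left (hvw i) (ha i)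

theorem monotone_linearCombination [SMulPosMono R M] {v : ι → M} (hv : 0 ≤ v) :
    Monotone (Finsupp.linearCombination R v) := by
  classical
  intro a b hab
  exact Finsupp.sum_le_sum_index hab
    (fun i _ _ _ hrs ↦ smul_le_smul_of_nonneg_right hrs (hv i)) fun i _ ↦ zero_smul R (v i)

end LinearCombination

section Chains

variable {X : Type*}

theorem linearCombination_abs (f : X → ℝ) (a : X →₀ ℝ) :
    Finsupp.linearCombination ℝ f |a| = a.sum fun x r ↦ |r| * f x := by
  have habs : |a| = a.mapRange abs abs_zero := by ext; rfl
  rw [habs]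
  exact Finsupp.sum_mapRange_index fun x ↦ zero_smul ℝ (f x)

/-- The `ℓ¹`-norm on finitely supported functions, whose dual space is `ℓ∞(X)`. It is encoded as the
total mass of the lattice absolute value `|a|`. -/
def l1Seminorm (X : Type*) : Seminorm ℝ (X →₀ ℝ) :=
  Seminorm.of (fun a ↦ Finsupp.linearCombination ℝ (1 : X → ℝ) |a|)
    (fun a b ↦ by
      rw [← map_add]
      exact monotone_linearCombination zero_le_one (abs_add_le a b))
    (fun r a ↦ by
      have habs : |r • a| = |r| • |a| := by ext x; exact abs_mul r (a x)
      rw [habs, map_smul, smul_eq_mul, Real.norm_eq_abs])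

theorem l1Seminorm_apply (a : X →₀ ℝ) :
    l1Seminorm X a = Finsupp.linearCombination ℝ (1 : X → ℝ) |a| := rfl

theorem l1Seminorm_single (x : X) (r : ℝ) : l1Seminorm X (Finsupp.single x r) = |r| := by
  simp [l1Seminorm_apply, linearCombination_abs]

theorem l1Seminorm_le_of_abs_le_abs {a b : X →₀ ℝ} (h : |a| ≤ |b|) :
    l1Seminorm X a ≤ l1Seminorm X b :=
  monotone_linearCombination zero_le_one h

theorem abs_linearCombination_le (a : X →₀ ℝ) {f : X → ℝ} {C : ℝ} (hf : ∀ x, |f x| ≤ C) :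
    |Finsupp.linearCombination ℝ f a| ≤ C * l1Seminorm X a := by
  rw [l1Seminorm_apply, linearCombination_abs, Finsupp.mul_sum]
  refine (Finset.abs_sum_le_sum_abs _ _).trans (Finset.sum_le_sum fun x _ ↦ ?_)
  calc |a x * f x| = |a x| * |f x| := abs_mul _ _
    _ ≤ |a x| * C := by gcongr; exact hf x
    _ = C * (|a x| * 1) := by ring

theorem abs_apply_le_norm (f : Linf X) (x : X) : |f x| ≤ ‖f‖ :=
  lp.norm_apply_le_norm ENNReal.top_ne_zero f x

theorem exists_linf_linearCombination_eq (ψ : Module.Dual ℝ (X →₀ ℝ)) {C : ℝ}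
    (hψ : ∀ a, ‖ψ a‖ ≤ C * l1Seminorm X a) :
    ∃ f : Linf X, Finsupp.linearCombination ℝ ⇑f = ψ := by
  refine ⟨⟨fun x ↦ ψ (Finsupp.single x 1), memℓp_infty ⟨C, ?_⟩⟩, by ext; simp⟩
  rintro _ ⟨x, rfl⟩
  simpa [l1Seminorm_single] using hψ (Finsupp.single x 1)

variable {ι : Type*} [Fintype ι]

variable (X) in
/-- The weighted `ℓ¹`-norm `∑ i, C i * ‖a i‖₁` on finite families of finitely supported functions,
which dominates the functional in the Hahn-Banach extension. -/
def weightedL1Seminorm (C : ι → NNReal) : Seminorm ℝ (ι → X →₀ ℝ) :=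
  ∑ i, C i • (l1Seminorm X).comp (LinearMap.proj (φ := fun _ : ι ↦ X →₀ ℝ) i)

theorem weightedL1Seminorm_apply (C : ι → NNReal) (a : ι → X →₀ ℝ) :
    weightedL1Seminorm X C a = ∑ i, C i * l1Seminorm X (a i) := by
  simp [weightedL1Seminorm, NNReal.smul_def]

theorem exists_linf_sum_linearCombination_eq {C : ι → NNReal} (φ : Module.Dual ℝ (ι → X →₀ ℝ))
    (hφ : ∀ a, ‖φ a‖ ≤ weightedL1Seminorm X C a) :
    ∃ f : ι → Linf X, ∀ a, φ a = ∑ i, Finsupp.linearCombination ℝ (f i) (a i) := by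
  classical
  have hφ_single (i : ι) (a : X →₀ ℝ) : ‖φ (Pi.single i a)‖ ≤ C i * l1Seminorm X a := by
    refine (hφ _).trans_eq ?_
    rw [weightedL1Seminorm_apply, Fintype.sum_eq_single i fun j hj ↦ by simp [hj],
      Pi.single_eq_same]
  choose f hf using fun i ↦ exists_linf_linearCombination_eq
    (φ ∘ₗ LinearMap.single ℝ (fun _ ↦ X →₀ ℝ) i) (hφ_single i)
  refine ⟨f, fun a ↦ ?_⟩
  calc φ a = ∑ i, φ (Pi.single i (a i)) := by rw [← map_sum, Finset.univ_sum_single]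
    _ = ∑ i, Finsupp.linearCombination ℝ (f i) (a i) := by simp [hf]

end Chains

section Coboundaries

variable {G X : Type*} [Group G] [MulAction G X]

/-- Translation `(g · f)(x) = f (g⁻¹ • x)` on `ℓ∞(X)`, for a group `G` acting on `X`. -/
def translation (g : G) : Linf X →ₗ[ℝ] Linf X where
  toFun f := ⟨fun x ↦ f (g⁻¹ • x),
    memℓp_infty ⟨‖f‖, by rintro _ ⟨x, rfl⟩; exact abs_apply_le_norm f (g⁻¹ • x)⟩⟩
  map_add' _ _ := rfl
  map_smul' _ _ := rfl

variable (G X) in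
/-- The span of the functions `g · f - f` in `ℓ∞(X)`. For `X = G` the quotient of `ℓ∞(G)` by it is
`H₀(G; ℓ∞(G))`, and the class of `1` there is the Block-Weinberger fundamental class. -/
def coboundaries : Submodule ℝ (Linf X) :=
  Submodule.span ℝ {v | ∃ (g : G) (f : Linf X), v = translation g f - f}

theorem translation_sub_mem_coboundaries (g : G) (f : Linf X) :
    translation g f - f ∈ coboundaries G X :=
  Submodule.subset_span ⟨g, f, rfl⟩

theorem exists_eq_sum_of_mem_coboundaries {v : Linf X} (hv : v ∈ coboundaries G X) :
    ∃ (n : ℕ) (g : Fin n → G) (f : Fin n → Linf X), v = ∑ i, (translation (g i) (f i) - f i) := by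
  obtain ⟨n, c, w, rfl⟩ := Submodule.mem_span_set'.1 hv
  choose g f hw using fun i ↦ (w i).2
  exact ⟨n, g, fun i ↦ c i • f i, by simp [hw, smul_sub]⟩

/-- The map `a ↦ g⁻¹ · a - a` on finitely supported functions, whose transpose under the pairing
`(f, a) ↦ ∑ x, a x * f x` with `ℓ∞(X)` is `f ↦ g · f - f`. -/
def boundary (g : G) : (X →₀ ℝ) →ₗ[ℝ] (X →₀ ℝ) :=
  (Finsupp.domLCongr (MulAction.toPerm g⁻¹)).toLinearMap - LinearMap.id

theorem boundary_apply (g : G) (a : X →₀ ℝ) (x : X) : boundary g a x = a (g • x) - a x := by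
  simp [boundary, MulAction.toPerm_symm_apply]

theorem linearCombination_boundary (f : Linf X) (g : G) (a : X →₀ ℝ) :
    Finsupp.linearCombination ℝ f (boundary g a) =
      Finsupp.linearCombination ℝ ⇑(translation g f - f) a := by
  have htranslation : ⇑(translation g f) = f ∘ MulAction.toPerm g⁻¹ := rfl
  simp only [boundary, LinearMap.sub_apply, LinearEquiv.coe_coe, Finsupp.domLCongr_apply,
    Finsupp.domCongr_apply, LinearMap.id_apply, map_sub, Finsupp.linearCombination_equivMapDomain,
    lp.coeFn_sub, htranslation]
  simp only [Finsupp.linearCombination_apply, Pi.sub_apply, smul_sub, Finsupp.sum_sub]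

theorem l1Seminorm_boundary_abs_le (g : G) (a : X →₀ ℝ) :
    l1Seminorm X (boundary g |a|) ≤ l1Seminorm X (boundary g a) := by
  refine l1Seminorm_le_of_abs_le_abs fun x ↦ ?_
  change |boundary g |a| x| ≤ |boundary g a x|
  simp only [boundary_apply]
  exact abs_abs_sub_abs_le (a (g • x)) (a x)

theorem linearCombination_sum_boundary {ι : Type*} [Fintype ι] (g : ι → G) (f : ι → Linf X)
    (a : X →₀ ℝ) : ∑ i, Finsupp.linearCombination ℝ (f i) (boundary (g i) a) =
      Finsupp.linearCombination ℝ ⇑(∑ i, (translation (g i) (f i) - f i)) a := by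
  simp only [linearCombination_boundary, lp.coeFn_sum]
  simp only [Finsupp.linearCombination_apply, Finset.sum_apply, smul_eq_mul, Finset.mul_sum]
  exact (Finsupp.sum_finsetSum_comm ..).symm

theorem l1Seminorm_le_sum_boundary {ι : Type*} [Fintype ι] {g : ι → G} {f : ι → Linf X}
    (h : ∀ x, 1 ≤ (∑ i, (translation (g i) (f i) - f i)) x) (a : X →₀ ℝ) :
    l1Seminorm X a ≤ ∑ i, ‖f i‖ * l1Seminorm X (boundary (g i) a) := by
  calc l1Seminorm X a
      ≤ Finsupp.linearCombination ℝ ⇑(∑ i, (translation (g i) (f i) - f i)) |a| :=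
        linearCombination_mono_left (abs_nonneg a) h
    _ = ∑ i, Finsupp.linearCombination ℝ (f i) (boundary (g i) |a|) :=
        (linearCombination_sum_boundary g f |a|).symm
    _ ≤ ∑ i, ‖f i‖ * l1Seminorm X (boundary (g i) a) := by
        gcongr with i
        calc Finsupp.linearCombination ℝ (f i) (boundary (g i) |a|)
            ≤ ‖f i‖ * l1Seminorm X (boundary (g i) |a|) :=
              (le_abs_self _).trans (abs_linearCombination_le _ (abs_apply_le_norm (f i)))
          _ ≤ ‖f i‖ * l1Seminorm X (boundary (g i) a) := by
              gcongr
              exact l1Seminorm_boundary_abs_le (g i) a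

theorem exists_sum_translation_sub_eq_lone {ι : Type*} [Fintype ι] {g : ι → G} {f : ι → Linf X}
    (h : ∀ x, 1 ≤ (∑ i, (translation (g i) (f i) - f i)) x) :
    ∃ f' : ι → Linf X, ∑ i, (translation (g i) (f' i) - f' i) = lone X := by
  let total : Module.Dual ℝ (X →₀ ℝ) := Finsupp.linearCombination ℝ (1 : X → ℝ)
  let D : (X →₀ ℝ) →ₗ[ℝ] ι → X →₀ ℝ := LinearMap.pi fun i ↦ boundary (g i)
  have htotal (a : X →₀ ℝ) : ‖total a‖ ≤ weightedL1Seminorm X (fun i ↦ ‖f i‖₊) (D a) := calc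
    ‖total a‖ ≤ 1 * l1Seminorm X a := abs_linearCombination_le a fun _ ↦ abs_one.le
    _ = l1Seminorm X a := one_mul _
    _ ≤ ∑ i, ‖f i‖ * l1Seminorm X (boundary (g i) a) := l1Seminorm_le_sum_boundary h a
    _ = weightedL1Seminorm X (fun i ↦ ‖f i‖₊) (D a) := by
      simp [weightedL1Seminorm_apply, D]
  obtain ⟨φ, hφD, hφ⟩ := exists_dual_comp_eq_of_norm_le_seminorm D total _ htotal
  obtain ⟨f', hf'⟩ := exists_linf_sum_linearCombination_eq φ hφ
  refine ⟨f', lp.ext <| funext fun x ↦ ?_⟩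
  have hpair : total (Finsupp.single x 1) = Finsupp.linearCombination ℝ
      ⇑(∑ i, (translation (g i) (f' i) - f' i)) (Finsupp.single x 1) := by
    rw [← hφD, LinearMap.comp_apply, hf', ← linearCombination_sum_boundary]
    rfl
  simp only [total, Finsupp.linearCombination_single, one_smul] at hpair
  exact hpair.symm

theorem lone_mem_coboundaries_of_one_le {v : Linf X} (hv : v ∈ coboundaries G X)
    (h : ∀ x, 1 ≤ v x) : lone X ∈ coboundaries G X := by
  obtain ⟨n, g, f, rfl⟩ := exists_eq_sum_of_mem_coboundaries hv
  obtain ⟨f', hf'⟩ := exists_sum_translation_sub_eq_lone h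
  rw [← hf']
  exact Submodule.sum_mem _ fun i _ ↦ translation_sub_mem_coboundaries (g i) (f' i)

end Coboundaries

section Mean

variable {X : Type*}

theorem norm_lone_le_one (X : Type*) : ‖lone X‖ ≤ 1 :=
  lp.norm_le_of_forall_le zero_le_one fun _ ↦ norm_one.le

theorem one_le_norm_lone_sub {V : Submodule ℝ (Linf X)} (hV : ∀ v ∈ V, ∃ x, v x < 1) {v : Linf X}
    (hv : v ∈ V) : 1 ≤ ‖lone X - v‖ := by
  by_contra! hlt
  have hpos : 0 < 1 - ‖lone X - v‖ := sub_pos.2 hlt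
  obtain ⟨x, hx⟩ := hV _ (V.smul_mem (1 - ‖lone X - v‖)⁻¹ hv)
  have hvx : v x < 1 - ‖lone X - v‖ := by
    simpa [inv_mul_lt_iff₀ hpos] using hx
  have hle : 1 - v x ≤ ‖lone X - v‖ := (le_abs_self _).trans (abs_apply_le_norm (lone X - v) x)
  linarith

theorem nonneg_of_norm_le_one_of_map_lone_eq_one {μ : Linf X →L[ℝ] ℝ} (hμ : ‖μ‖ ≤ 1)
    (hone : μ (lone X) = 1) {f : Linf X} (hf : ∀ x, 0 ≤ f x) : 0 ≤ μ f := by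
  have hnorm : ‖‖f‖ • lone X - f‖ ≤ ‖f‖ := by
    refine lp.norm_le_of_forall_le (norm_nonneg f) fun x ↦ ?_
    change |‖f‖ * 1 - f x| ≤ ‖f‖
    have hle : f x ≤ ‖f‖ := (le_abs_self _).trans (abs_apply_le_norm f x)
    rw [abs_le]
    constructor <;> linarith [hf x, norm_nonneg f]
  have hbound : μ (‖f‖ • lone X - f) ≤ ‖f‖ :=
    (le_abs_self _).trans ((μ.le_of_opNorm_le hμ _).trans (by simpa using hnorm))
  simpa [hone] using hbound

theorem exists_mean_eq_zero_of_forall_exists_lt_one {V : Submodule ℝ (Linf X)}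
    (hV : ∀ v ∈ V, ∃ x, v x < 1) :
    ∃ μ : Linf X →L[ℝ] ℝ, (∀ f : Linf X, (∀ x, 0 ≤ f x) → 0 ≤ μ f) ∧ ‖μ‖ = 1 ∧
      ∀ v ∈ V, μ v = 0 := by
  have hmk_le (f : Linf X) : ‖V.mkQL f‖ ≤ ‖f‖ := Submodule.Quotient.norm_mk_le V f
  have hmk_ge : 1 ≤ ‖V.mkQL (lone X)‖ := calc
    1 ≤ Metric.infDist (lone X) V := (Metric.le_infDist ⟨0, V.zero_mem⟩).2 fun v hv ↦
      (one_le_norm_lone_sub hV hv).trans_eq (dist_eq_norm _ _).symm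
    _ = ‖V.mkQL (lone X)‖ := (QuotientAddGroup.norm_mk (S := V.toAddSubgroup) (lone X)).symm
  have hmk_lone : ‖V.mkQL (lone X)‖ = 1 := ((hmk_le _).trans (norm_lone_le_one X)).antisymm hmk_ge
  obtain ⟨ψ, hψ_norm, hψ_lone⟩ := exists_dual_vector ℝ (V.mkQL (lone X))
    (hmk_lone.trans_ne one_ne_zero)
  let μ : Linf X →L[ℝ] ℝ := ψ ∘L V.mkQL
  have hμ_lone : μ (lone X) = 1 := hψ_lone.trans (congrArg _ hmk_lone)
  have hμ_le : ‖μ‖ ≤ 1 := μ.opNorm_le_bound zero_le_one fun f ↦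
    ψ.le_of_opNorm_le_of_le hψ_norm.le (hmk_le f)
  have hμ_ge : 1 ≤ ‖μ‖ := by
    simpa [hμ_lone] using μ.le_opNorm_of_le (norm_lone_le_one X)
  refine ⟨μ, fun f hf ↦ nonneg_of_norm_le_one_of_map_lone_eq_one hμ_le hμ_lone hf,
    hμ_le.antisymm hμ_ge, fun v hv ↦ ?_⟩
  simp [μ, (Submodule.Quotient.mk_eq_zero V).2 hv]

end Mean

theorem amenable_of_one_not_in_span_of_coboundaries_general {G X : Type*} [Group G]
    [MulAction G X] (h : lone X ∉ coboundaries G X) :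
    ∃ μ : Linf X →L[ℝ] ℝ,
      (∀ f : Linf X, (∀ x, 0 ≤ f x) → 0 ≤ μ f) ∧ ‖μ‖ = 1 ∧
      ∀ (g : G) (f : Linf X), μ (translation g f) = μ f := by
  have hlt : ∀ v ∈ coboundaries G X, ∃ x, v x < 1 := by
    contrapose! h
    obtain ⟨v, hv, hv_one⟩ := h
    exact lone_mem_coboundaries_of_one_le hv hv_one
  obtain ⟨μ, hμ_nonneg, hμ_norm, hμ_zero⟩ := exists_mean_eq_zero_of_forall_exists_lt_one hlt
  refine ⟨μ, hμ_nonneg, hμ_norm, fun g f ↦ sub_eq_zero.1 ?_⟩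
  rw [← map_sub]
  exact hμ_zero _ (translation_sub_mem_coboundaries g f)

/-- If the constant function `1` does not lie in the linear span of
`{g·f − f : g ∈ G, f ∈ ℓ∞(G)}`, then `G` admits a left-invariant mean, i.e. is amenable. -/
theorem amenable_of_one_not_in_span_of_coboundaries
    (G : Type*) [Group G] [Countable G]
    (h : lone G ∉ Submodule.span ℝ
        {x : Linf G | ∃ (g : G) (f : Linf G), x = ltrans g f - f}) :
    ∃ μ : Linf G →L[ℝ] ℝ,
      (∀ f : Linf G, (∀ h : G, 0 ≤ f h) → 0 ≤ μ f) ∧ ‖μ‖ = 1 ∧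
      (∀ (g : G) (f : Linf G), μ (ltrans g f) = μ f) :=
  amenable_of_one_not_in_span_of_coboundaries_general h
end
end

section
/- The free group F₂ on two generators is not amenable: there is no positive linear functional μ on ℓ∞(F₂) with ‖μ‖ = 1 satisfying μ(g·f) = μ(f) for all g ∈ F₂ and f ∈ ℓ∞(F₂). -/
noncomputable section
open scoped ENNReal

/-- The free group on two generators. -/
abbrev F2 : Type := FreeGroup (Fin 2)

/-- The first generator `a` of `F₂`. -/
def genA : F2 := FreeGroup.of 0

/-- The second generator `b` of `F₂`. -/
def genB : F2 := FreeGroup.of 1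

/-- The group element of `F₂` corresponding to a letter: `(i, true) ↦ xᵢ`, `(i, false) ↦ xᵢ⁻¹`.
As `s` ranges over `Fin 2 × Bool`, `el s` ranges over `S = {a, b, a⁻¹, b⁻¹}`. -/
def el (s : Fin 2 × Bool) : F2 := cond s.2 (FreeGroup.of s.1) (FreeGroup.of s.1)⁻¹

/-- The inverse letter: `invL s` is the letter representing `(el s)⁻¹`. -/
def invL (s : Fin 2 × Bool) : Fin 2 × Bool := (s.1, !s.2)

/-!
If `W(s)` denotes the set of reduced words starting with the letter `s`, then for every generator
`a` the sets `W(a)` and `a · W(a⁻¹)` cover the free group. An invariant mean therefore gives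
`W(a)` and `W(a⁻¹)` total mass at least `1`. For two generators `a ≠ b` the four sets
`W(a), W(a⁻¹), W(b), W(b⁻¹)` are disjoint, so their total mass is at most `1`, although it should be
at least `2`.
-/

/-- The indicator function of a set `s ⊆ X` as an element of `ℓ∞(X)`. A mean on `X` sends it to the
mass of `s` for the associated finitely additive probability measure. -/
def Linf.indicator {X : Type*} (s : Set X) : Linf X :=
  ⟨s.indicator 1, memℓp_infty ⟨1, by
    rintro _ ⟨x, rfl⟩
    simpa using norm_indicator_le_norm_self (s := s) (1 : X → ℝ) x⟩⟩

/-- Positivity of a linear functional on `ℓ∞(X)`, as for a mean. It is stated for plain linear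
maps because positivity already implies continuity. -/
def Linf.IsPositive {X : Type*} (μ : Linf X →ₗ[ℝ] ℝ) : Prop :=
  ∀ f : Linf X, (∀ x, 0 ≤ f x) → 0 ≤ μ f

/-- Invariance of a linear functional on `ℓ∞(G)` under left translation. -/
def Linf.IsLeftInvariant {G : Type*} [Group G] (μ : Linf G →ₗ[ℝ] ℝ) : Prop :=
  ∀ (g : G) (f : Linf G), μ (ltrans g f) = μ f

namespace Linf

section Indicator

variable {X : Type*}

theorem indicator_apply (s : Set X) (x : X) : indicator s x = s.indicator 1 x :=
  rfl

theorem lone_apply (x : X) : lone X x = 1 :=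
  rfl

theorem lone_le_indicator_add_indicator {s t : Set X} (hst : s ∪ t = Set.univ) (x : X) :
    lone X x ≤ (indicator s + indicator t) x := by
  calc lone X x
      = (s ∪ t).indicator 1 x := by rw [hst, Set.indicator_univ, lone_apply, Pi.one_apply]
    _ ≤ (s ∪ t).indicator 1 x + (s ∩ t).indicator 1 x :=
        le_add_of_nonneg_right (Set.indicator_nonneg (fun _ _ => zero_le_one) x)
    _ = (indicator s + indicator t) x := Set.indicator_union_add_inter_apply 1 s t x

theorem sum_indicator_le_lone {ι : Type*} {I : Finset ι} {s : ι → Set X}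
    (hs : (I : Set ι).PairwiseDisjoint s) (x : X) :
    (∑ i ∈ I, indicator (s i)) x ≤ lone X x := by
  calc (∑ i ∈ I, indicator (s i)) x
      = ∑ i ∈ I, (s i).indicator 1 x := by
        simp only [lp.coeFn_sum, Finset.sum_apply, indicator_apply]
    _ = (⋃ i ∈ I, s i).indicator 1 x := (Finset.indicator_biUnion_apply I s hs x).symm
    _ ≤ lone X x := Set.indicator_le_self' (fun _ _ => zero_le_one) x

open scoped Pointwise in
theorem ltrans_indicator {G : Type*} [Group G] (g : G) (s : Set G) :
    ltrans g (indicator s) = indicator (g • s) := by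
  classical
  ext h
  change s.indicator 1 (g⁻¹ * h) = (g • s).indicator 1 h
  simp only [Set.indicator_apply, Set.mem_smul_set_iff_inv_smul_mem, smul_eq_mul, Pi.one_apply]

end Indicator

namespace IsPositive

section Functional

variable {X : Type*} {μ : Linf X →ₗ[ℝ] ℝ}

theorem map_le_map (hμ : IsPositive μ) {f g : Linf X} (hfg : ∀ x, f x ≤ g x) : μ f ≤ μ g := by
  rw [← sub_nonneg, ← map_sub]
  exact hμ (g - f) fun x => sub_nonneg.2 (hfg x)

theorem map_le_norm_mul_map_lone (hμ : IsPositive μ) (f : Linf X) : μ f ≤ ‖f‖ * μ (lone X) := by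
  rw [← smul_eq_mul, ← map_smul]
  refine hμ.map_le_map fun x => ?_
  calc f x ≤ ‖f x‖ := Real.le_norm_self (f x)
    _ ≤ ‖f‖ := lp.norm_apply_le_norm ENNReal.top_ne_zero f x
    _ = (‖f‖ • lone X) x := (mul_one ‖f‖).symm

theorem eq_zero_of_map_lone_nonpos (hμ : IsPositive μ) (hone : μ (lone X) ≤ 0) : μ = 0 := by
  have hnonpos (f : Linf X) : μ f ≤ 0 :=
    (hμ.map_le_norm_mul_map_lone f).trans (mul_nonpos_of_nonneg_of_nonpos (norm_nonneg f) hone)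
  refine LinearMap.ext fun f => le_antisymm (hnonpos f) ?_
  exact neg_nonpos.1 (map_neg μ f ▸ hnonpos (-f))

theorem sum_map_indicator_le_map_lone (hμ : IsPositive μ) {ι : Type*} {I : Finset ι}
    {s : ι → Set X} (hs : (I : Set ι).PairwiseDisjoint s) :
    ∑ i ∈ I, μ (indicator (s i)) ≤ μ (lone X) := by
  rw [← map_sum]
  exact hμ.map_le_map (sum_indicator_le_lone hs)

end Functional

section Group

open scoped Pointwise

variable {G : Type*} [Group G] {μ : Linf G →ₗ[ℝ] ℝ}

theorem map_lone_le_of_union_smul_eq_univ (hμ : IsPositive μ) (hinv : IsLeftInvariant μ)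
    {s t : Set G} {g : G} (hst : s ∪ g • t = Set.univ) :
    μ (lone G) ≤ μ (indicator s) + μ (indicator t) := by
  calc μ (lone G) ≤ μ (indicator s + indicator (g • t)) :=
        hμ.map_le_map (lone_le_indicator_add_indicator hst)
    _ = μ (indicator s) + μ (indicator t) := by rw [map_add, ← ltrans_indicator, hinv]

theorem eq_zero_of_paradoxical (hμ : IsPositive μ) (hinv : IsLeftInvariant μ)
    {ι : Type*} [Nontrivial ι] {s : ι × Bool → Set G} {g : ι → G}
    (hdisj : Pairwise (Function.onFun Disjoint s))
    (hcover : ∀ i, s (i, true) ∪ g i • s (i, false) = Set.univ) : μ = 0 := by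
  classical
  obtain ⟨i, j, hij⟩ := exists_pair_ne ι
  have hpiece (k : ι) : μ (lone G) ≤ μ (indicator (s (k, true))) + μ (indicator (s (k, false))) :=
    hμ.map_lone_le_of_union_smul_eq_univ hinv (hcover k)
  have htotal : μ (lone G) + μ (lone G) ≤ μ (lone G) := by
    calc μ (lone G) + μ (lone G)
        ≤ ∑ k ∈ {i, j}, (μ (indicator (s (k, true))) + μ (indicator (s (k, false)))) := by
          rw [Finset.sum_pair hij]
          exact add_le_add (hpiece i) (hpiece j)
      _ = ∑ w ∈ {i, j} ×ˢ Finset.univ, μ (indicator (s w)) := by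
          simp only [Finset.sum_product, Fintype.sum_bool]
      _ ≤ μ (lone G) := hμ.sum_map_indicator_le_map_lone (hdisj.set_pairwise _)
  exact hμ.eq_zero_of_map_lone_nonpos (add_le_iff_nonpos_left.1 htotal)

end Group

end IsPositive

end Linf

open scoped Pointwise in
theorem startsWith_union_of_smul_startsWith_eq_univ {α : Type*} [DecidableEq α] (i : α) :
    FreeGroup.startsWith (i, true) ∪ FreeGroup.of i • FreeGroup.startsWith (i, false) =
      Set.univ := by
  refine Set.eq_univ_of_forall fun h => or_iff_not_imp_left.2 fun hh => ?_
  rw [Set.mem_smul_set_iff_inv_smul_mem]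
  exact FreeGroup.startsWith_mk_mul h hh

theorem freeGroup_two_not_amenable_general {α : Type*} [Nontrivial α]
    {μ : Linf (FreeGroup α) →ₗ[ℝ] ℝ} (hμ : Linf.IsPositive μ) (hinv : Linf.IsLeftInvariant μ) :
    μ = 0 := by
  classical
  exact hμ.eq_zero_of_paradoxical hinv (fun _ _ => FreeGroup.startsWith.disjoint_iff_ne.2)
    startsWith_union_of_smul_startsWith_eq_univ

/-- The free group `F₂` on two generators is not amenable: there is no left-invariant
mean on `ℓ∞(F₂)`. -/
theorem freeGroup_two_not_amenable :
    ¬ ∃ μ : Linf F2 →L[ℝ] ℝ,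
        (∀ f : Linf F2, (∀ h : F2, 0 ≤ f h) → 0 ≤ μ f) ∧ ‖μ‖ = 1 ∧
        (∀ (g : F2) (f : Linf F2), μ (ltrans g f) = μ f) := by
  rintro ⟨μ, hpos, hnorm, hinv⟩
  have hzero : μ = 0 :=
    ContinuousLinearMap.coe_injective
      (freeGroup_two_not_amenable_general (μ := μ.toLinearMap) hpos hinv)
  simp [hzero] at hnorm
end
end

section
/- For the free group F₂ on two generators, the constant function 1 lies in the linear span of {g·f − f : g ∈ F₂, f ∈ ℓ∞(F₂)} inside ℓ∞(F₂); indeed there is a family (f_g)_{g ∈ F₂} of elements of ℓ∞(F₂), supported on the four generators S = {a, b, a⁻¹, b⁻¹} and with each f_s an indicator function, such that Σ_{s ∈ S} (s·f_s − f_s) is the constant function 2. (The Block–Weinberger fundamental class of F₂ vanishes.) -/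
noncomputable section
open scoped ENNReal

/-- The indicator function of a set `A ⊆ G` as an element of `ℓ∞(G)`. -/
def indFn (G : Type*) (A : Set G) : Linf G :=
  ⟨A.indicator fun _ => (1 : ℝ), memℓp_infty ⟨1, by
    rintro x ⟨h, rfl⟩
    by_cases hh : h ∈ A <;> simp [Set.indicator_apply, hh]⟩⟩

/-!
Orient the edges `{h, s h}` of the Cayley tree so that every vertex has exactly one outgoing edge,
and let `f_s` be the indicator of the vertices whose outgoing edge carries the letter `s`. Each
edge points one way only, so `s · f_s = 1 - f_{s⁻¹}`; each vertex has one outgoing edge, so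
`∑ f_s = 1`. In rank `n` this gives `∑ (s · f_s - f_s) = (2 n - 1) - 1`, which is `2` for `n = 2`.
-/

open scoped Pointwise

section Indicator

variable {G ι : Type*}

lemma indFn_compl (A : Set G) : indFn G Aᶜ = lone G - indFn G A :=
  lp.ext (Set.indicator_compl A _)

lemma sum_indFn_fiber [Fintype ι] (d : G → ι) : ∑ i, indFn G (d ⁻¹' {i}) = lone G := by
  classical
  apply lp.ext
  funext h
  rw [lp.coeFn_sum, Finset.sum_apply]
  simp [indFn, lone, Set.indicator_apply]

variable [Group G]

lemma ltrans_indFn (g : G) (A : Set G) : ltrans g (indFn G A) = indFn G (g • A) := by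
  classical
  apply lp.ext
  funext h
  simp only [ltrans, indFn, Set.indicator_apply, Set.mem_smul_set_iff_inv_smul_mem, smul_eq_mul]

theorem sum_ltrans_sub_indFn_fiber [Fintype ι] (e : ι → G) (σ : Equiv.Perm ι) (d : G → ι)
    (hd : ∀ i, e i • d ⁻¹' {i} = (d ⁻¹' {σ i})ᶜ) :
    ∑ i, (ltrans (e i) (indFn G (d ⁻¹' {i})) - indFn G (d ⁻¹' {i})) =
      (Fintype.card ι - 2 : ℝ) • lone G := by
  have sum_perm : ∑ i, indFn G (d ⁻¹' {σ i}) = lone G := by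
    rw [Equiv.sum_comp σ fun i => indFn G (d ⁻¹' {i}), sum_indFn_fiber]
  calc ∑ i, (ltrans (e i) (indFn G (d ⁻¹' {i})) - indFn G (d ⁻¹' {i}))
      = ∑ i, (lone G - indFn G (d ⁻¹' {σ i}) - indFn G (d ⁻¹' {i})) := by
        simp only [ltrans_indFn, hd, indFn_compl]
    _ = (Fintype.card ι : ℝ) • lone G - lone G - lone G := by
        simp only [Finset.sum_sub_distrib, sum_perm, sum_indFn_fiber, Finset.sum_const,
          Finset.card_univ, Nat.cast_smul_eq_nsmul]
    _ = (Fintype.card ι - 2 : ℝ) • lone G := by module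

end Indicator

section FreeGroup

variable {α : Type*}

/-- The formal inverse of a letter, `(i, b) ↦ (i, !b)`, as a permutation of the alphabet
`α × Bool` of `FreeGroup α`. -/
def letterInv : Equiv.Perm (α × Bool) := (Equiv.refl α).prodCongr Equiv.boolNot

lemma letterInv_letterInv (s : α × Bool) : letterInv (letterInv s) = s :=
  Prod.ext rfl (Bool.not_not s.2)

lemma letterInv_ne_self (s : α × Bool) : letterInv s ≠ s :=
  fun h => Bool.not_ne_self s.2 (congrArg Prod.snd h)

lemma inv_mk_singleton (s : α × Bool) :
    (FreeGroup.mk [s])⁻¹ = FreeGroup.mk [letterInv s] :=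
  FreeGroup.inv_mk

lemma mk_singleton_injective :
    Function.Injective fun s : α × Bool => FreeGroup.mk [s] := by
  classical
  intro s t h
  simpa only [FreeGroup.reduce_singleton, List.cons.injEq, and_true]
    using FreeGroup.reduce.sound h

variable [DecidableEq α]

lemma toWord_mk_singleton_mul_eq_cons_or (s : α × Bool) (h : FreeGroup α) :
    (FreeGroup.mk [s] * h).toWord = s :: h.toWord ∨
      h.toWord = letterInv s :: (FreeGroup.mk [s] * h).toWord := by
  have toWord_eq : (FreeGroup.mk [s] * h).toWord = FreeGroup.reduce (s :: h.toWord) := by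
    rw [FreeGroup.toWord_mul, FreeGroup.toWord_mk, FreeGroup.reduce_singleton,
      List.singleton_append]
  rw [toWord_eq, FreeGroup.reduce.cons, FreeGroup.reduce_toWord]
  rcases h.toWord with _ | ⟨x, w⟩
  · exact Or.inl rfl
  · by_cases hx : x = letterInv s
    · subst hx
      simp [letterInv]
    · left
      have : ¬(s.1 = x.1 ∧ s.2 = !x.2) := fun ⟨h₁, h₂⟩ =>
        hx (Prod.ext h₁.symm (by simp [letterInv, h₂]))
      simp only [this, if_false]

/-- The letter `s` on the outgoing edge `h → s h` at each vertex `h` of the Cayley tree, for the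
orientation built outwards from the root `1`, whose outgoing edge carries `x₀`. The edge joining a
new vertex `s h` to its parent `h` is outgoing at `s h` unless it is already outgoing at `h`; in
that case the outgoing edge at `s h` may be any other one, and we repeat the letter `s`. -/
def outLetter (x₀ : α × Bool) (h : FreeGroup α) : α × Bool :=
  h.toWord.foldr (fun s x => if x = s then s else letterInv s) x₀

lemma outLetter_mk_singleton_mul_eq_iff (x₀ s : α × Bool) (h : FreeGroup α) :
    outLetter x₀ (FreeGroup.mk [s] * h) = letterInv s ↔ outLetter x₀ h ≠ s := by
  have s_ne := letterInv_ne_self s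
  rcases toWord_mk_singleton_mul_eq_cons_or s h with child | parent
  · have : outLetter x₀ (FreeGroup.mk [s] * h) =
        if outLetter x₀ h = s then s else letterInv s := by
      rw [outLetter, child, List.foldr_cons, outLetter]
    grind
  · have : outLetter x₀ h =
        if outLetter x₀ (FreeGroup.mk [s] * h) = letterInv s then letterInv s else s := by
      rw [outLetter, parent, List.foldr_cons, letterInv_letterInv, outLetter]
    grind

lemma mk_singleton_smul_outLetter_fiber (x₀ s : α × Bool) :
    FreeGroup.mk [s] • outLetter x₀ ⁻¹' {s} = (outLetter x₀ ⁻¹' {letterInv s})ᶜ := by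
  ext h
  have := outLetter_mk_singleton_mul_eq_iff x₀ (letterInv s) h
  rw [letterInv_letterInv] at this
  rwa [Set.mem_smul_set_iff_inv_smul_mem, inv_mk_singleton]

end FreeGroup

theorem blockWeinberger_class_vanishes_for_freeGroup_two_general
    {α : Type*} [Fintype α] [Nontrivial α] :
    lone (FreeGroup α) ∈ Submodule.span ℝ
      {x : Linf (FreeGroup α) | ∃ (g : FreeGroup α) (f : Linf (FreeGroup α)),
        x = ltrans g f - f} ∧
    ∃ F : FreeGroup α → Linf (FreeGroup α),
      (∀ g, (∀ s : α × Bool, g ≠ FreeGroup.mk [s]) → F g = 0) ∧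
      (∀ s : α × Bool, ∃ A : Set (FreeGroup α), F (FreeGroup.mk [s]) = indFn (FreeGroup α) A) ∧
      ∑ s : α × Bool, (ltrans (FreeGroup.mk [s]) (F (FreeGroup.mk [s])) - F (FreeGroup.mk [s])) =
        (2 * Fintype.card α - 2 : ℝ) • lone (FreeGroup α) := by
  classical
  obtain ⟨a⟩ : Nonempty α := inferInstance
  let f (s : α × Bool) : Linf (FreeGroup α) := indFn _ (outLetter (a, true) ⁻¹' {s})
  have sum_eq : ∑ s, (ltrans (FreeGroup.mk [s]) (f s) - f s) =
      (2 * Fintype.card α - 2 : ℝ) • lone (FreeGroup α) := by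
    rw [sum_ltrans_sub_indFn_fiber _ letterInv _ (mk_singleton_smul_outLetter_fiber _),
      Fintype.card_prod, Fintype.card_bool, Nat.cast_mul, Nat.cast_ofNat, mul_comm]
  constructor
  · have coeff_ne_zero : (2 * Fintype.card α - 2 : ℝ) ≠ 0 := by
      have : (1 : ℝ) < Fintype.card α := mod_cast Fintype.one_lt_card
      linarith
    rw [← Submodule.smul_mem_iff _ coeff_ne_zero, ← sum_eq]
    exact Submodule.sum_mem _ fun s _ => Submodule.subset_span ⟨_, _, rfl⟩
  · let F : FreeGroup α → Linf (FreeGroup α) := Function.extend (fun s => FreeGroup.mk [s]) f 0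
    have F_mk (s : α × Bool) : F (FreeGroup.mk [s]) = f s :=
      mk_singleton_injective.extend_apply f _ s
    refine ⟨F, fun g hg => ?_, fun s => ⟨_, F_mk s⟩, by simpa only [F_mk] using sum_eq⟩
    exact Function.extend_apply' f _ g fun ⟨s, hs⟩ => hg s hs.symm

lemma el_eq_mk_singleton (s : Fin 2 × Bool) : el s = FreeGroup.mk [s] := by
  rcases s with ⟨i, _ | _⟩ <;> rfl

/-- For `F₂` the constant function `1` lies in the span of `{g·f − f}`: indeed there is a
family `(f_g)` supported on the four generators `S = {a, b, a⁻¹, b⁻¹}` (as `s` ranges over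
`Fin 2 × Bool`, `el s` ranges over `S`), each `f_s` an indicator function, with
`Σ_{s ∈ S} (s·f_s − f_s)` the constant function `2`.  (The Block–Weinberger fundamental
class of `F₂` vanishes.) -/
theorem blockWeinberger_class_vanishes_for_freeGroup_two :
    lone F2 ∈ Submodule.span ℝ
      {x : Linf F2 | ∃ (g : F2) (f : Linf F2), x = ltrans g f - f} ∧
    ∃ F : F2 → Linf F2,
      (∀ g : F2, (∀ s : Fin 2 × Bool, g ≠ el s) → F g = 0) ∧
      (∀ s : Fin 2 × Bool, ∃ A : Set F2, F (el s) = indFn F2 A) ∧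
      (∑ s : Fin 2 × Bool, (ltrans (el s) (F (el s)) - F (el s))) = (2 : ℝ) • lone F2 := by
  have coeff_eq_two : (2 * Fintype.card (Fin 2) - 2 : ℝ) = 2 := by norm_num
  simpa only [← el_eq_mk_singleton, coeff_eq_two] using
    blockWeinberger_class_vanishes_for_freeGroup_two_general (α := Fin 2)
end
end
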